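/- Let k ∈ (0,1). Then I_0^− = −4, I_1^− = 32(1−2k²), and for every n ∈ ℕ the recurrence I_{n+2}^− = −8(1−2k²) I_{n+1}^− − 3 Σ_{j=0}^{n} C(2n+4, 2j+2) I_j^− I_{n−j}^− holds, where C(a,b) denotes the binomial coefficient. -/

import Mathlib

/-!
The integrals are Taylor coefficients of a Weierstrass function. Let `L` be the lattice generated by
`K' ± i K` (`rhombic`). After the substitution `x = t²`, the kernel `1 / (cosh pt - cos qt)` is
expanded as a double geometric series in `exp (-(p ± i q) t)` and integrated term by term
(`integral_pow_div_sinh_mul_sinh`). The two integrals in `I_n^-` become the sums of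
`w ^ (-(2n + 4))` over the two pairs of opposite quadrants of `L - K'`, so that
(`moments_eq_sumInvPow`)
`I_n^- = -2 (2n + 3)! ∑_{l ∈ L} (l - K') ^ (-(2n + 4)) = -2 ℘^{(2n + 2)}(K')`.

The second ingredient is the value of the invariants (`rhombic_invariants`):
`℘(K') = e = -(2/3) (1 - 2k²)` and `g₂ = 12 e² - 4`. On the real and imaginary axes `℘` is a real
function running monotonically from the pole to the common half-period value `℘(K') = ℘(i K)`.
Quadrature along each axis expresses the half periods as `√ρ K' = K(√(1 - μ))` and `√ρ K = K(√μ)`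
for some `μ ∈ (0, 1)` and `ρ > 0` that determine `e` and `g₂`
(`WeierstrassAxis.exists_half_periods_eq_ellipticF`); strict monotonicity of the complete elliptic
integral forces `μ = k²` and `ρ = 1`.

Since `℘'' = 6 ℘² - g₂ / 2`, the function `G = -2 (℘ - e)` satisfies
`G'' = -4 - 8 (1 - 2k²) G - 3 G²`, vanishes at `K'` and is even about `K'`. Differentiating `2n + 4`
times with Leibniz' rule gives the recurrence, and orders `0` and `2` give the initial values.
-/


open MeasureTheory Real

/-- The complete elliptic integral of the first kind `K(k)`. -/
noncomputable def ellipticK (k : ℝ) : ℝ :=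
  ∫ θ in (0 : ℝ)..(π / 2), (1 - k ^ 2 * Real.sin θ ^ 2) ^ (-(1 / 2) : ℝ)

/-- Kuznetsov's moment integral `I_n^+`, realizing
`(1/2)∫_ℝ x^n dx/(cos(√x K) + cosh(√x K'))` with `√x = i√(−x)` for `x < 0`. -/
noncomputable def Iplus (k : ℝ) (n : ℕ) : ℝ :=
  (1 / 2) * (∫ x in Set.Ioi (0 : ℝ), x ^ n /
      (Real.cos (ellipticK k * Real.sqrt x) +
        Real.cosh (ellipticK (Real.sqrt (1 - k ^ 2)) * Real.sqrt x)))
  + ((-1 : ℝ) ^ n / 2) * (∫ x in Set.Ioi (0 : ℝ), x ^ n /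
      (Real.cosh (ellipticK k * Real.sqrt x) +
        Real.cos (ellipticK (Real.sqrt (1 - k ^ 2)) * Real.sqrt x)))

/-- Kuznetsov's moment integral `I_n^−`, realizing
`∫_ℝ x^{n+1} dx/(cos(√x K) − cosh(√x K'))` with `√x = i√(−x)` for `x < 0`. -/
noncomputable def Iminus (k : ℝ) (n : ℕ) : ℝ :=
  (∫ x in Set.Ioi (0 : ℝ), x ^ (n + 1) /
      (Real.cos (ellipticK k * Real.sqrt x) -
        Real.cosh (ellipticK (Real.sqrt (1 - k ^ 2)) * Real.sqrt x)))
  + (-1 : ℝ) ^ (n + 1) * (∫ x in Set.Ioi (0 : ℝ), x ^ (n + 1) /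
      (Real.cosh (ellipticK k * Real.sqrt x) -
        Real.cos (ellipticK (Real.sqrt (1 - k ^ 2)) * Real.sqrt x)))

open Filter Set Topology
open scoped ComplexConjugate

/-! ### Newton's equation -/

lemma eqOn_Ioo_of_hasDerivAt_of_contDiff {E : Type*} [NormedAddCommGroup E] [NormedSpace ℝ E]
    [CompleteSpace E] {v : E → E} (hv : ContDiff ℝ 1 v) {α β : ℝ → E} {a b t₀ : ℝ}
    (ht₀ : t₀ ∈ Ioo a b) (hα : ∀ t ∈ Ioo a b, HasDerivAt α (v (α t)) t)
    (hβ : ∀ t ∈ Ioo a b, HasDerivAt β (v (β t)) t) (h₀ : α t₀ = β t₀) :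
    EqOn α β (Ioo a b) :=
  isMIntegralCurveOn_Ioo_eqOn_of_contMDiff_boundaryless ht₀
    (contMDiff_vectorSpace_iff_contDiff.mpr hv)
    (fun t ht => (hα t ht).hasFDerivAt.hasMFDerivAt.hasMFDerivWithinAt)
    (fun t ht => (hβ t ht).hasFDerivAt.hasMFDerivAt.hasMFDerivWithinAt) h₀

/-- Newton's equation `f'' = F(f)` on `s`, as a first-order system in `f` and its velocity `p`. -/
structure IsNewtonSolutionOn (F f p : ℝ → ℝ) (s : Set ℝ) : Prop where
  hasDerivAt : ∀ t ∈ s, HasDerivAt f (p t) t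
  hasDerivAt_velocity : ∀ t ∈ s, HasDerivAt p (F (f t)) t

namespace IsNewtonSolutionOn

variable {F f p g q : ℝ → ℝ} {s s' : Set ℝ} {a b x : ℝ}

lemma mono (h : IsNewtonSolutionOn F f p s) (hs : s' ⊆ s) : IsNewtonSolutionOn F f p s' :=
  ⟨fun t ht => h.hasDerivAt t (hs ht), fun t ht => h.hasDerivAt_velocity t (hs ht)⟩

lemma continuousOn (h : IsNewtonSolutionOn F f p s) : ContinuousOn f s :=
  HasDerivAt.continuousOn h.hasDerivAt

lemma continuousOn_velocity (h : IsNewtonSolutionOn F f p s) : ContinuousOn p s :=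
  HasDerivAt.continuousOn h.hasDerivAt_velocity

lemma const {c : ℝ} (hc : F c = 0) (s : Set ℝ) :
    IsNewtonSolutionOn F (fun _ => c) (fun _ => 0) s :=
  ⟨fun t _ => hasDerivAt_const t c, fun t _ => hc.symm ▸ hasDerivAt_const t (0 : ℝ)⟩

lemma comp_const_sub (h : IsNewtonSolutionOn F f p s) (c : ℝ) :
    IsNewtonSolutionOn F (fun t => f (c - t)) (fun t => -p (c - t)) {t | c - t ∈ s} :=
  ⟨fun t ht => (h.hasDerivAt _ ht).comp_const_sub c t, fun t ht => by
    simpa using ((h.hasDerivAt_velocity _ ht).comp_const_sub c t).fun_neg⟩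

lemma eqOn_Ioo (hF : ContDiff ℝ 1 F) (hf : IsNewtonSolutionOn F f p (Ioo a b))
    (hg : IsNewtonSolutionOn F g q (Ioo a b)) (hx : x ∈ Ioo a b) (h₀ : f x = g x)
    (h₁ : p x = q x) : EqOn f g (Ioo a b) := fun _ ht =>
  congrArg Prod.fst <| eqOn_Ioo_of_hasDerivAt_of_contDiff
    (v := fun z : ℝ × ℝ => (z.2, F z.1)) (by fun_prop) hx
    (fun t ht => (hf.hasDerivAt t ht).prodMk (hf.hasDerivAt_velocity t ht))
    (fun t ht => (hg.hasDerivAt t ht).prodMk (hg.hasDerivAt_velocity t ht))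
    (Prod.ext h₀ h₁) ht

lemma eqOn_comp_sub_of_velocity_eq_zero (hF : ContDiff ℝ 1 F)
    (hf : IsNewtonSolutionOn F f p (Ioo (x - b) (x + b))) (hb : 0 < b) (hx : p x = 0) :
    EqOn f (fun t => f (2 * x - t)) (Ioo (x - b) (x + b)) := by
  have hx' : 2 * x - x = x := by ring
  refine hf.eqOn_Ioo hF ((hf.comp_const_sub (2 * x)).mono fun t ht => ?_)
    (show x ∈ Ioo (x - b) (x + b) by simp [hb]) (by rw [hx']) (by simp [hx', hx])
  constructor <;> linarith [ht.1, ht.2]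

section Blowup

variable (hF : ContDiff ℝ 1 F) (hf : IsNewtonSolutionOn F f p (Ioo 0 (2 * a)))
  (hlim : Tendsto f (𝓝[>] 0) atTop)

include hF hf hlim

/-- The solution is symmetric about a critical point `x`, so that it would be finite at `0` because
it is finite at `2x`. -/
lemma velocity_ne_zero_of_tendsto_atTop (hx : x ∈ Ioo 0 a) : p x ≠ 0 := by
  intro hpx
  have hsym := eqOn_comp_sub_of_velocity_eq_zero hF (b := x)
    (hf.mono (Ioo_subset_Ioo (by simp) (by linarith [hx.2]))) hx.1 hpx
  have h2x : ContinuousAt f (2 * x - 0) :=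
    (hf.hasDerivAt _ ⟨by linarith [hx.1], by linarith [hx.2]⟩).continuousAt
  have hlim' : Tendsto (fun t => f (2 * x - t)) (𝓝[>] 0) (𝓝 (f (2 * x - 0))) :=
    (h2x.tendsto.comp (tendsto_const_nhds.sub tendsto_id)).mono_left nhdsWithin_le_nhds
  refine not_tendsto_atTop_of_tendsto_nhds hlim' (hlim.congr' ?_)
  filter_upwards [Ioo_mem_nhdsGT (add_pos hx.1 hx.1)] with t ht
  exact hsym (by simpa using ht)

lemma velocity_neg_of_tendsto_atTop (hx : x ∈ Ioo 0 a) : p x < 0 := by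
  have hsub : Ioo 0 a ⊆ Ioo 0 (2 * a) := Ioo_subset_Ioo_right (by linarith [hx.1, hx.2])
  by_contra! hpx
  have hpos : ∀ t ∈ Ioo 0 a, 0 < p t := by
    intro t ht
    by_contra! hpt
    obtain ⟨u, hu, hpu⟩ := isPreconnected_Ioo.intermediate_value ht hx
      (hf.mono hsub).continuousOn_velocity ⟨hpt, hpx⟩
    exact hf.velocity_ne_zero_of_tendsto_atTop hF hlim hu hpu
  have hmono : StrictMonoOn f (Ioo 0 a) :=
    strictMonoOn_of_hasDerivWithinAt_pos (convex_Ioo _ _) (hf.mono hsub).continuousOn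
      (fun t ht => (hf.hasDerivAt t (hsub (interior_subset ht))).hasDerivWithinAt)
      (fun t ht => hpos t (interior_subset ht))
  obtain ⟨t, hft, ht⟩ := ((hlim.eventually_ge_atTop (f x)).and (Ioo_mem_nhdsGT hx.1)).exists
  exact hft.not_gt (hmono ⟨ht.1, ht.2.trans hx.2⟩ hx ht.2)

/-- A critical point that is an equilibrium would make the solution constant. -/
lemma force_ne_zero_of_tendsto_atTop (hx : x ∈ Ioo 0 (2 * a)) (hpx : p x = 0) : F (f x) ≠ 0 := by
  intro hFx
  have hconst := hf.eqOn_Ioo hF (.const hFx _) hx rfl hpx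
  refine not_tendsto_atTop_of_tendsto_nhds (f := fun _ => f x) tendsto_const_nhds
    (hlim.congr' ?_)
  exact hconst.eventuallyEq_of_mem (Ioo_mem_nhdsGT (hx.1.trans hx.2))

end Blowup

end IsNewtonSolutionOn

/-! ### Elliptic integrals -/

/-- The incomplete elliptic integral of the first kind, as a function of the parameter `m = k²` and
the amplitude `ψ`. -/
noncomputable def ellipticF (m ψ : ℝ) : ℝ :=
  ∫ θ in (0 : ℝ)..ψ, (1 - m * sin θ ^ 2) ^ (-(1 / 2) : ℝ)

lemma ellipticK_eq_ellipticF (k : ℝ) : ellipticK k = ellipticF (k ^ 2) (π / 2) := rfl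

section EllipticF

variable {m m' : ℝ}

lemma one_sub_mul_sin_sq_pos (hm : m < 1) (θ : ℝ) : 0 < 1 - m * sin θ ^ 2 := by
  obtain hm₀ | hm₀ := le_total m 0 <;> nlinarith [sin_sq_le_one θ, sq_nonneg (sin θ)]

lemma continuous_one_sub_mul_sin_sq_rpow (hm : m < 1) (r : ℝ) :
    Continuous fun θ : ℝ => (1 - m * sin θ ^ 2) ^ r :=
  Continuous.rpow_const (by fun_prop) fun θ => .inl (one_sub_mul_sin_sq_pos hm θ).ne'

lemma hasDerivAt_ellipticF (hm : m < 1) (ψ : ℝ) :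
    HasDerivAt (ellipticF m) ((1 - m * sin ψ ^ 2) ^ (-(1 / 2) : ℝ)) ψ :=
  (continuous_one_sub_mul_sin_sq_rpow hm _).integral_hasStrictDerivAt 0 ψ |>.hasDerivAt

lemma continuous_ellipticF (hm : m < 1) : Continuous (ellipticF m) :=
  continuous_iff_continuousAt.mpr fun ψ => (hasDerivAt_ellipticF hm ψ).continuousAt

@[simp]
lemma ellipticF_zero_right (m : ℝ) : ellipticF m 0 = 0 := intervalIntegral.integral_same

lemma ellipticF_pi (hm : m < 1) : ellipticF m π = 2 * ellipticF m (π / 2) := by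
  have hi (a b : ℝ) := (continuous_one_sub_mul_sin_sq_rpow hm (-(1 / 2))).intervalIntegrable
    (μ := volume) a b
  have hrefl := intervalIntegral.integral_comp_sub_left
    (fun θ => (1 - m * sin θ ^ 2) ^ (-(1 / 2) : ℝ)) (a := 0) (b := π / 2) π
  simp only [sin_pi_sub, sub_zero, sub_half] at hrefl
  rw [ellipticF, ← intervalIntegral.integral_add_adjacent_intervals (hi 0 (π / 2)) (hi (π / 2) π),
    ← hrefl, ellipticF, two_mul]

lemma ellipticF_pi_div_two_lt (h : m < m') (hm' : m' < 1) :
    ellipticF m (π / 2) < ellipticF m' (π / 2) := by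
  refine intervalIntegral.integral_lt_integral_of_continuousOn_of_le_of_exists_lt pi_div_two_pos
    (continuous_one_sub_mul_sin_sq_rpow (h.trans hm') _).continuousOn
    (continuous_one_sub_mul_sin_sq_rpow hm' _).continuousOn (fun θ _ => ?_)
    ⟨π / 2, right_mem_Icc.mpr pi_div_two_pos.le, ?_⟩
  · exact rpow_le_rpow_of_nonpos (one_sub_mul_sin_sq_pos hm' θ) (by gcongr) (by norm_num)
  · exact rpow_lt_rpow_of_neg (one_sub_mul_sin_sq_pos hm' _) (by simpa using h) (by norm_num)

lemma ellipticF_pi_div_two_pos (hm : m < 1) : 0 < ellipticF m (π / 2) :=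
  intervalIntegral.intervalIntegral_pos_of_pos
    ((continuous_one_sub_mul_sin_sq_rpow hm _).intervalIntegrable _ _)
    (fun θ => rpow_pos_of_pos (one_sub_mul_sin_sq_pos hm θ) _) pi_div_two_pos

/-- The ratio of the complementary complete integrals increases with the parameter. -/
lemma parameter_eq_of_mul_ellipticF_eq {r : ℝ} (hm : m ∈ Ioo (0 : ℝ) 1) (hm' : m' ∈ Ioo (0 : ℝ) 1)
    (h : r * ellipticF m (π / 2) = ellipticF m' (π / 2))
    (h' : r * ellipticF (1 - m) (π / 2) = ellipticF (1 - m') (π / 2)) : m = m' ∧ r = 1 := by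
  have hpos := ellipticF_pi_div_two_pos hm.2
  have hpos' : 0 < ellipticF (1 - m) (π / 2) := ellipticF_pi_div_two_pos (by linarith [hm.1])
  obtain hlt | rfl | hlt := lt_trichotomy m m'
  · have h₁ := ellipticF_pi_div_two_lt hlt hm'.2
    have h₂ := ellipticF_pi_div_two_lt (sub_lt_sub_left hlt 1) (by linarith [hm.1])
    rw [← h] at h₁
    rw [← h'] at h₂
    nlinarith
  · exact ⟨rfl, (mul_eq_right₀ hpos.ne').mp h⟩
  · have h₁ := ellipticF_pi_div_two_lt hlt hm.2
    have h₂ := ellipticF_pi_div_two_lt (sub_lt_sub_left hlt 1) (by linarith [hm'.1])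
    rw [← h] at h₁
    rw [← h'] at h₂
    nlinarith

end EllipticF

/-! ### Quadrature -/

lemma sin_two_mul_arctan (s : ℝ) : sin (2 * arctan s) = 2 * s / (1 + s ^ 2) := by
  have hs : √(1 + s ^ 2) ^ 2 = 1 + s ^ 2 := sq_sqrt (by positivity)
  rw [sin_two_mul, sin_arctan, cos_arctan]
  field_simp
  rw [hs]

lemma one_sub_mul_sin_two_mul_arctan_sq (c s : ℝ) :
    1 - (1 - c) / 2 * sin (2 * arctan s) ^ 2
      = (s ^ 4 + 2 * c * s ^ 2 + 1) / (1 + s ^ 2) ^ 2 := by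
  rw [sin_two_mul_arctan]
  field_simp
  ring

section Quadrature

variable {c ρ : ℝ} {f p : ℝ → ℝ}

/-- The substitution `f = ρ tan² (ψ / 2)` turns `f'² = 4 f (f² + 2 c ρ f + ρ²)` into
`ψ' = -2 √ρ √(1 - m sin² ψ)`. -/
lemma hasDerivAt_ellipticF_two_mul_arctan_sqrt {t : ℝ} (hρ : 0 < ρ) (hc : -1 < c)
    (hf : HasDerivAt f (p t) t) (hft : 0 < f t) (hpt : p t < 0)
    (heq : p t ^ 2 = 4 * f t * (f t ^ 2 + 2 * c * ρ * f t + ρ ^ 2)) :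
    HasDerivAt (fun t => ellipticF ((1 - c) / 2) (2 * arctan √(f t / ρ))) (-(2 * √ρ)) t := by
  have hderiv := (hasDerivAt_ellipticF (m := (1 - c) / 2) (by linarith) _).comp t
    (((hf.div_const ρ).sqrt (by positivity)).arctan.const_mul 2)
  refine hderiv.congr_deriv ?_
  rw [one_sub_mul_sin_two_mul_arctan_sq]
  obtain ⟨s, hs, hfs⟩ : ∃ s > 0, f t = ρ * s ^ 2 :=
    ⟨√(f t / ρ), by positivity, by rw [sq_sqrt (by positivity)]; field_simp⟩
  rw [hfs, mul_div_cancel_left₀ _ hρ.ne', sqrt_sq hs.le]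
  set W := s ^ 4 + 2 * c * s ^ 2 + 1 with hW
  have hWpos : 0 < W := by nlinarith [sq_nonneg (s ^ 2 - 1), pow_pos hs 2]
  have hp : p t = -(2 * (ρ * √ρ) * s * √W) := by
    refine ((sq_eq_sq_iff_eq_or_eq_neg.mp ?_).resolve_left fun h => ?_)
    · rw [heq, hfs, show (2 * (ρ * √ρ) * s * √W) ^ 2 = 4 * ρ ^ 2 * √ρ ^ 2 * s ^ 2 * √W ^ 2 by ring,
        sq_sqrt hρ.le, sq_sqrt hWpos.le, hW]
      ring
    · exact hpt.not_ge (h ▸ by positivity)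
  rw [hp, rpow_neg (by positivity), ← sqrt_eq_rpow, sqrt_div hWpos.le, sqrt_sq (by positivity)]
  field_simp

/-- Here `a` is the time in which the solution falls from `+∞` to `0`. -/
lemma sqrt_mul_eq_ellipticF_of_tendsto {a : ℝ} (ha : 0 < a) (hρ : 0 < ρ) (hc : -1 < c)
    (hf : ∀ t ∈ Ioo 0 a, HasDerivAt f (p t) t) (hpos : ∀ t ∈ Ioo 0 a, 0 < f t)
    (hneg : ∀ t ∈ Ioo 0 a, p t < 0)
    (heq : ∀ t ∈ Ioo 0 a, p t ^ 2 = 4 * f t * (f t ^ 2 + 2 * c * ρ * f t + ρ ^ 2))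
    (hlim₀ : Tendsto f (𝓝[>] 0) atTop) (hlim : Tendsto f (𝓝[<] a) (𝓝 0)) :
    √ρ * a = ellipticF ((1 - c) / 2) (π / 2) := by
  have hm : (1 - c) / 2 < 1 := by linarith
  have hlim₀' : Tendsto (fun t => ellipticF ((1 - c) / 2) (2 * arctan √(f t / ρ))) (𝓝[>] 0)
      (𝓝 (ellipticF ((1 - c) / 2) (2 * (π / 2)))) :=
    ((continuous_ellipticF hm).tendsto _).comp <| .const_mul 2 <|
      (tendsto_arctan_atTop.mono_right nhdsWithin_le_nhds).comp <|
      tendsto_sqrt_atTop.comp (hlim₀.atTop_div_const hρ)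
  have hlim' : Tendsto (fun t => ellipticF ((1 - c) / 2) (2 * arctan √(f t / ρ))) (𝓝[<] a)
      (𝓝 (ellipticF ((1 - c) / 2) (2 * arctan √(0 / ρ)))) :=
    ((continuous_ellipticF hm).tendsto _).comp <| .const_mul 2 <|
      (continuous_arctan.tendsto _).comp <| (continuous_sqrt.tendsto _).comp (hlim.div_const ρ)
  have hint := intervalIntegral.integral_eq_sub_of_hasDerivAt_of_tendsto ha
    (fun t ht => hasDerivAt_ellipticF_two_mul_arctan_sqrt hρ hc (hf t ht) (hpos t ht) (hneg t ht)
      (heq t ht)) intervalIntegrable_const hlim₀' hlim'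
  rw [mul_div_cancel₀ π two_ne_zero, ellipticF_pi hm] at hint
  simp only [intervalIntegral.integral_const, zero_div, sqrt_zero, arctan_zero, mul_zero,
    ellipticF_zero_right, sub_zero, smul_eq_mul] at hint
  linarith

end Quadrature

/-! ### Half periods -/

/-- The restriction `f` of a Weierstrass function to a symmetry axis of its lattice, with derivative
`p`: it satisfies the Weierstrass equations with real invariants `γ₂`, `γ₃` on `(0, 2a)`, where `0`
is a pole and `a` a half period. -/
structure WeierstrassAxis (a γ₂ γ₃ : ℝ) (f p : ℝ → ℝ) : Prop where
  pos : 0 < a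
  solution : IsNewtonSolutionOn (fun x => 6 * x ^ 2 - γ₂ / 2) f p (Ioo 0 (2 * a))
  velocity_sq : ∀ t ∈ Ioo 0 (2 * a), p t ^ 2 = 4 * f t ^ 3 - γ₂ * f t - γ₃
  tendsto_atTop : Tendsto f (𝓝[>] 0) atTop
  velocity_half_period : p a = 0

namespace WeierstrassAxis

variable {a b γ₂ γ₃ : ℝ} {f p g q : ℝ → ℝ}

section

variable (h : WeierstrassAxis a γ₂ γ₃ f p)

include h

lemma half_period_mem : a ∈ Ioo 0 (2 * a) := ⟨h.pos, by linarith [h.pos]⟩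

lemma Ioc_subset : Ioc 0 a ⊆ Ioo 0 (2 * a) := fun _ ht => ⟨ht.1, by linarith [ht.2, h.pos]⟩

lemma velocity_neg {t : ℝ} (ht : t ∈ Ioo 0 a) : p t < 0 :=
  h.solution.velocity_neg_of_tendsto_atTop (by fun_prop) h.tendsto_atTop ht

lemma six_mul_sq_half_period_ne : 6 * f a ^ 2 - γ₂ / 2 ≠ 0 :=
  IsNewtonSolutionOn.force_ne_zero_of_tendsto_atTop (F := fun x => 6 * x ^ 2 - γ₂ / 2)
    (by fun_prop) h.solution h.tendsto_atTop h.half_period_mem h.velocity_half_period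

lemma strictAntiOn : StrictAntiOn f (Ioc 0 a) :=
  strictAntiOn_of_hasDerivWithinAt_neg (convex_Ioc _ _) (h.solution.mono h.Ioc_subset).continuousOn
    (fun t ht => (h.solution.hasDerivAt t (h.Ioc_subset (interior_subset ht))).hasDerivWithinAt)
    (fun t ht => h.velocity_neg (by rwa [interior_Ioc] at ht))

lemma half_period_lt {t : ℝ} (ht : t ∈ Ioo 0 a) : f a < f t :=
  h.strictAntiOn (Ioo_subset_Ioc_self ht) (right_mem_Ioc.mpr h.pos) ht.2

lemma cubic_half_period_eq_zero : 4 * f a ^ 3 - γ₂ * f a - γ₃ = 0 := by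
  rw [← h.velocity_sq a h.half_period_mem, h.velocity_half_period, zero_pow two_ne_zero]

lemma cubic_pos {X : ℝ} (hX : f a < X) : 0 < 4 * X ^ 3 - γ₂ * X - γ₃ := by
  obtain ⟨s, hXs, hs⟩ := ((h.tendsto_atTop.eventually_gt_atTop X).and
    (Ioo_mem_nhdsGT h.pos)).exists
  have hsub : Icc s a ⊆ Ioc 0 a := fun t ht => ⟨hs.1.trans_le ht.1, ht.2⟩
  obtain ⟨t, ht, rfl⟩ := intermediate_value_Icc' hs.2.le
    (h.solution.mono (hsub.trans h.Ioc_subset)).continuousOn ⟨hX.le, hXs.le⟩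
  have hta : t < a := ht.2.lt_of_ne (by rintro rfl; exact hX.false)
  rw [← h.velocity_sq t (h.Ioc_subset (hsub ht))]
  exact sq_pos_of_neg (h.velocity_neg ⟨(hsub ht).1, hta⟩)

/-- The hypotheses say that the Weierstrass cubic is `4 Y (Y² + 2 c ρ Y + ρ²)` in
`Y = X - f a`. -/
lemma sqrt_mul_eq_ellipticF {c ρ : ℝ} (hρ : 0 < ρ) (hc : -1 < c)
    (hρ₂ : ρ ^ 2 = 3 * f a ^ 2 - γ₂ / 4) (hcρ : 3 * f a = 2 * c * ρ) :
    √ρ * a = ellipticF ((1 - c) / 2) (π / 2) := by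
  have hsub : Ioo 0 a ⊆ Ioo 0 (2 * a) := Ioo_subset_Ioc_self.trans h.Ioc_subset
  have hlim : Tendsto (fun t => f t - f a) (𝓝[<] a) (𝓝 0) := by
    have hcont := (h.solution.hasDerivAt a h.half_period_mem).continuousAt
    simpa using (hcont.tendsto.mono_left nhdsWithin_le_nhds).sub_const (f a)
  refine sqrt_mul_eq_ellipticF_of_tendsto h.pos hρ hc
    (fun t ht => (h.solution.hasDerivAt t (hsub ht)).sub_const (f a))
    (fun t ht => sub_pos.mpr (h.half_period_lt ht)) (fun t ht => h.velocity_neg ht)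
    (fun t ht => ?_) (tendsto_atTop_add_const_right _ _ h.tendsto_atTop) hlim
  rw [h.velocity_sq t (hsub ht), hρ₂, ← hcρ]
  linear_combination h.cubic_half_period_eq_zero

end

variable (h : WeierstrassAxis a γ₂ γ₃ f p) (h' : WeierstrassAxis b γ₂ (-γ₃) g q)
  (hab : g b = -f a)

include h h' hab

/-- One axis shows that the cubic is positive to the right of `f a`, the other that it is negative
to the left. -/
lemma cofactor_pos_of_ne {X : ℝ} (hX : X ≠ f a) :
    0 < X ^ 2 + f a * X + (f a ^ 2 - γ₂ / 4) := by
  have hzero := h.cubic_half_period_eq_zero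
  obtain hlt | hgt := hX.lt_or_gt
  · have hcubic : 0 < 4 * (f a - X) * (X ^ 2 + f a * X + (f a ^ 2 - γ₂ / 4)) := by
      convert h'.cubic_pos (X := -X) (by linarith) using 1
      linear_combination hzero
    exact pos_of_mul_pos_right hcubic (by linarith)
  · have hcubic : 0 < 4 * (X - f a) * (X ^ 2 + f a * X + (f a ^ 2 - γ₂ / 4)) := by
      convert h.cubic_pos hgt using 1
      linear_combination -hzero
    exact pos_of_mul_pos_right hcubic (by linarith)

lemma cofactor_pos (X : ℝ) : 0 < X ^ 2 + f a * X + (f a ^ 2 - γ₂ / 4) := by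
  obtain rfl | hX := eq_or_ne X (f a)
  · have hcont : Continuous fun X => X ^ 2 + f a * X + (f a ^ 2 - γ₂ / 4) := by fun_prop
    have hnonneg := ge_of_tendsto (hcont.tendsto (f a) |>.mono_left nhdsWithin_le_nhds)
      (eventually_mem_nhdsWithin.mono fun X (hX : X ∈ {f a}ᶜ) =>
        (cofactor_pos_of_ne h h' hab hX).le)
    refine hnonneg.lt_of_ne fun hzero => h.six_mul_sq_half_period_ne ?_
    linear_combination -2 * hzero
  · exact cofactor_pos_of_ne h h' hab hX

lemma invariant_lt_three_mul_sq : γ₂ < 3 * f a ^ 2 := by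
  have hdiscrim := discrim_lt_zero (a := 1) (b := f a) (c := f a ^ 2 - γ₂ / 4) one_ne_zero
    fun X => by linarith [cofactor_pos h h' hab X]
  rw [discrim] at hdiscrim
  linarith

lemma exists_half_periods_eq_ellipticF :
    ∃ ρ c : ℝ, 0 < ρ ∧ c ∈ Ioo (-1) 1 ∧ ρ ^ 2 = 3 * f a ^ 2 - γ₂ / 4 ∧ 3 * f a = 2 * c * ρ ∧
      √ρ * a = ellipticF ((1 - c) / 2) (π / 2) ∧ √ρ * b = ellipticF ((1 + c) / 2) (π / 2) := by
  have hpos : 0 < 3 * f a ^ 2 - γ₂ / 4 := by linarith [cofactor_pos h h' hab (f a)]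
  obtain ⟨ρ, hρ, hρ₂⟩ : ∃ ρ > 0, ρ ^ 2 = 3 * f a ^ 2 - γ₂ / 4 :=
    ⟨√(3 * f a ^ 2 - γ₂ / 4), sqrt_pos.mpr hpos, sq_sqrt hpos.le⟩
  obtain ⟨c, hcρ⟩ : ∃ c, 3 * f a = 2 * c * ρ := ⟨3 * f a / (2 * ρ), by field_simp⟩
  have hc : c ∈ Ioo (-1) 1 := by
    refine abs_lt.mp ((sq_lt_one_iff_abs_lt_one c).mp ?_)
    have hlt : c ^ 2 * ρ ^ 2 < 1 * ρ ^ 2 := by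
      linarith [invariant_lt_three_mul_sq h h' hab, congrArg (· ^ 2) hcρ]
    nlinarith [sq_pos_of_pos hρ]
  refine ⟨ρ, c, hρ, hc, hρ₂, hcρ, h.sqrt_mul_eq_ellipticF hρ hc.1 hρ₂ hcρ, ?_⟩
  convert h'.sqrt_mul_eq_ellipticF (c := -c) hρ (neg_lt_neg hc.2)
    (by rw [hab, neg_sq, hρ₂]) (by linear_combination 3 * hab - hcρ) using 2
  ring

/-- The ratio of the half periods determines the parameter found by quadrature, which must therefore
be `m`. -/
lemma invariants_of_half_periods_eq_ellipticF {m : ℝ} (hm : m ∈ Ioo (0 : ℝ) 1)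
    (ha : a = ellipticF (1 - m) (π / 2)) (hb : b = ellipticF m (π / 2)) :
    f a = -(2 / 3) * (1 - 2 * m) ∧ γ₂ = 12 * f a ^ 2 - 4 := by
  obtain ⟨ρ, c, hρ, hc, hρ₂, hcρ, hρa, hρb⟩ := exists_half_periods_eq_ellipticF h h' hab
  have hc' : 1 - (1 + c) / 2 = (1 - c) / 2 := by ring
  obtain ⟨hmc, hρ₁⟩ := parameter_eq_of_mul_ellipticF_eq (m' := (1 + c) / 2) (r := √ρ) hm
    ⟨by linarith [hc.1], by linarith [hc.2]⟩ (by rw [← hb, hρb]) (by rw [← ha, hρa, hc'])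
  rw [sqrt_eq_one] at hρ₁
  subst hρ₁ hmc
  constructor <;> linarith

end WeierstrassAxis

/-! ### The Weierstrass function -/

section Weierstrass

variable (L : PeriodPair)

lemma isPreconnected_compl_periodLattice : IsPreconnected ((L.lattice : Set ℂ)ᶜ) := by
  have : Countable L.lattice := L.latticeEquivProd.toEquiv.injective.countable
  exact ((to_countable (L.lattice : Set ℂ)).isConnected_compl_of_one_lt_rank
    (by simp [Complex.rank_real_complex])).isPreconnected

lemma weierstrassP_eq_weierstrassPExcept_zero_add (z : ℂ) :
    L.weierstrassP z = L.weierstrassPExcept 0 z + 1 / z ^ 2 := by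
  simpa using (L.weierstrassPExcept_add 0 z).symm

variable {L}

lemma hasDerivAt_weierstrassP {z : ℂ} (hz : z ∉ L.lattice) :
    HasDerivAt L.weierstrassP (L.derivWeierstrassP z) z :=
  L.deriv_weierstrassP ▸ (L.analyticOnNhd_weierstrassP z hz).differentiableAt.hasDerivAt

variable (L) in
lemma exists_derivWeierstrassP_ne_zero : ∃ z ∉ L.lattice, L.derivWeierstrassP z ≠ 0 := by
  by_contra! hzero
  obtain ⟨C, hC⟩ := L.isClosed_lattice.isOpen_compl.exists_is_const_of_deriv_eq_zero
    (isPreconnected_compl_periodLattice L) L.differentiableOn_weierstrassP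
    (fun z hz => by rw [L.deriv_weierstrassP]; exact hzero z hz)
  have hev : L.weierstrassP =ᶠ[𝓝[≠] 0] fun _ => C := by
    filter_upwards [mem_nhdsWithin_of_mem_nhds (L.compl_lattice_sdiff_singleton_mem_nhds 0),
      self_mem_nhdsWithin] with z hz hz0 using hC z fun hzL => hz ⟨hzL, hz0⟩
  have horder := meromorphicOrderAt_congr hev
  rw [L.order_weierstrassP 0 (zero_mem _), meromorphicOrderAt_const] at horder
  have htop : (-2 : WithTop ℤ) ≠ ⊤ := WithTop.coe_ne_top (a := (-2 : ℤ))
  have hnonneg : ¬(0 : WithTop ℤ) ≤ -2 := by decide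
  split_ifs at horder
  exacts [htop horder, hnonneg horder.ge]

/-- Differentiating the Weierstrass equation gives this after cancellation of `℘'`, which is
analytic and not identically zero on a connected set. -/
lemma hasDerivAt_derivWeierstrassP {z : ℂ} (hz : z ∉ L.lattice) :
    HasDerivAt L.derivWeierstrassP (6 * L.weierstrassP z ^ 2 - L.g₂ / 2) z := by
  have han := L.analyticOnNhd_derivWeierstrassP
  have hmul : ∀ w ∈ (L.lattice : Set ℂ)ᶜ, L.derivWeierstrassP w *
      (deriv L.derivWeierstrassP w - (6 * L.weierstrassP w ^ 2 - L.g₂ / 2)) = 0 := by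
    intro w hw
    have hcubic := ((((hasDerivAt_weierstrassP hw).pow 3).const_mul 4).sub
      ((hasDerivAt_weierstrassP hw).const_mul L.g₂)).sub_const L.g₃
    have heq : L.derivWeierstrassP ^ 2 =ᶠ[𝓝 w]
        fun z => 4 * L.weierstrassP z ^ 3 - L.g₂ * L.weierstrassP z - L.g₃ := by
      filter_upwards [L.isClosed_lattice.isOpen_compl.mem_nhds hw] with z hz
      exact L.derivWeierstrassP_sq z hz
    have hderiv := (((han w hw).differentiableAt.hasDerivAt.pow 2).congr_of_eventuallyEq
      heq.symm).unique hcubic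
    norm_num at hderiv
    linear_combination hderiv / 2
  obtain hzero | hzero := han.eq_zero_or_eq_zero_of_mul_eq_zero
    (han.deriv.sub (((L.analyticOnNhd_weierstrassP.pow 2).const_smul (c := (6 : ℂ))).sub
      analyticOnNhd_const)) hmul (isPreconnected_compl_periodLattice L)
  · obtain ⟨w, hw, hne⟩ := exists_derivWeierstrassP_ne_zero L
    exact absurd (hzero w hw) hne
  · exact (han z hz).differentiableAt.hasDerivAt.congr_deriv (sub_eq_zero.mp (hzero z hz))

lemma weierstrassP_sub_of_mem {l : ℂ} (hl : l ∈ L.lattice) (z : ℂ) :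
    L.weierstrassP (l - z) = L.weierstrassP z := by
  rw [← neg_sub, L.weierstrassP_neg, L.weierstrassP_sub_coe z ⟨l, hl⟩]

lemma derivWeierstrassP_half_period {w : ℂ} (hw : 2 * w ∈ L.lattice) :
    L.derivWeierstrassP w = 0 := by
  have hodd : L.derivWeierstrassP w = -L.derivWeierstrassP w := by
    rw [← L.derivWeierstrassP_neg, ← L.derivWeierstrassP_add_coe (-w) ⟨2 * w, hw⟩]
    congr 1
    ring
  exact self_eq_neg.mp hodd

/-! ### Homogeneity and conjugation of lattice sums -/

section Homogeneity

variable {L' : PeriodPair} {c : ℂ}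

lemma tsum_lattice_mul {α : Type*} [AddCommMonoid α] [TopologicalSpace α]
    (hc : c ≠ 0) (hL : ∀ z, c * z ∈ L'.lattice ↔ z ∈ L.lattice) (F : ℂ → α) :
    ∑' l : L'.lattice, F l = ∑' l : L.lattice, F (c * l) :=
  (((Equiv.mulLeft₀ c hc).subtypeEquiv fun z => (hL z).symm).tsum_eq (fun l => F l)).symm

lemma weierstrassP_mul (hc : c ≠ 0) (hL : ∀ z, c * z ∈ L'.lattice ↔ z ∈ L.lattice) (z : ℂ) :
    L'.weierstrassP (c * z) = (c ^ 2)⁻¹ * L.weierstrassP z := by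
  rw [PeriodPair.weierstrassP, PeriodPair.weierstrassP, ← tsum_mul_left,
    tsum_lattice_mul hc hL fun l => 1 / (c * z - l) ^ 2 - 1 / l ^ 2]
  refine tsum_congr fun l => ?_
  rw [← mul_sub, mul_pow, mul_pow]
  simp only [one_div, mul_inv]
  ring

lemma G_mul (hc : c ≠ 0) (hL : ∀ z, c * z ∈ L'.lattice ↔ z ∈ L.lattice) (n : ℕ) :
    L'.G n = (c ^ n)⁻¹ * L.G n := by
  rw [PeriodPair.G, PeriodPair.G, ← tsum_mul_left, tsum_lattice_mul hc hL fun l => (l ^ n)⁻¹]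
  simp only [mul_pow, mul_inv]

end Homogeneity

section Conj

variable (hL : ∀ z, conj z ∈ L.lattice ↔ z ∈ L.lattice)

include hL

lemma conj_tsum_lattice (F : ℂ → ℂ) :
    conj (∑' l : L.lattice, F l) = ∑' l : L.lattice, conj (F (conj l)) := by
  rw [Complex.conj_tsum]
  exact ((starRingAut.toEquiv.subtypeEquiv fun z => (hL z).symm).tsum_eq
    (fun l : L.lattice => conj (F l))).symm

lemma conj_weierstrassP (z : ℂ) : conj (L.weierstrassP z) = L.weierstrassP (conj z) := by
  rw [PeriodPair.weierstrassP, conj_tsum_lattice hL fun l => 1 / (z - l) ^ 2 - 1 / l ^ 2]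
  simp [PeriodPair.weierstrassP]

lemma conj_derivWeierstrassP (z : ℂ) :
    conj (L.derivWeierstrassP z) = L.derivWeierstrassP (conj z) := by
  rw [PeriodPair.derivWeierstrassP, map_neg, conj_tsum_lattice hL fun l => 2 / (z - l) ^ 3]
  simp [PeriodPair.derivWeierstrassP, Complex.conj_ofNat]

lemma conj_G (n : ℕ) : conj (L.G n) = L.G n := by
  rw [PeriodPair.G, conj_tsum_lattice hL fun l => (l ^ n)⁻¹]
  simp

lemma ofReal_re_weierstrassP (t : ℝ) : ((L.weierstrassP t).re : ℂ) = L.weierstrassP t :=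
  Complex.conj_eq_iff_re.mp (by rw [conj_weierstrassP hL, Complex.conj_ofReal])

lemma ofReal_re_derivWeierstrassP (t : ℝ) :
    ((L.derivWeierstrassP t).re : ℂ) = L.derivWeierstrassP t :=
  Complex.conj_eq_iff_re.mp (by rw [conj_derivWeierstrassP hL, Complex.conj_ofReal])

lemma ofReal_re_g₂ : (L.g₂.re : ℂ) = L.g₂ :=
  Complex.conj_eq_iff_re.mp (by rw [PeriodPair.g₂, map_mul, conj_G hL, Complex.conj_ofNat])

lemma ofReal_re_g₃ : (L.g₃.re : ℂ) = L.g₃ :=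
  Complex.conj_eq_iff_re.mp (by rw [PeriodPair.g₃, map_mul, conj_G hL, Complex.conj_ofNat])

end Conj

end Weierstrass

/-! ### Real axes and rhombic lattices -/

section RealAxis

variable {L : PeriodPair}

lemma tendsto_re_weierstrassP_atTop :
    Tendsto (fun t : ℝ => (L.weierstrassP t).re) (𝓝[>] 0) atTop := by
  have hregular : Tendsto (fun t : ℝ => (L.weierstrassPExcept 0 t).re) (𝓝[>] 0)
      (𝓝 (L.weierstrassPExcept 0 (0 : ℝ)).re) := by
    have hcont : ContinuousAt (L.weierstrassPExcept 0) ((0 : ℝ) : ℂ) := by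
      simpa using (L.analyticAt_weierstrassPExcept 0).continuousAt
    exact (Complex.continuous_re.continuousAt.comp
      (hcont.comp Complex.continuous_ofReal.continuousAt)).tendsto.mono_left nhdsWithin_le_nhds
  have hpole : Tendsto (fun t : ℝ => t⁻¹ ^ 2) (𝓝[>] 0) atTop :=
    (tendsto_pow_atTop two_ne_zero).comp tendsto_inv_nhdsGT_zero
  refine (hregular.add_atTop hpole).congr fun t => ?_
  rw [weierstrassP_eq_weierstrassPExcept_zero_add, Complex.add_re, ← Complex.ofReal_pow,
    ← Complex.ofReal_one, ← Complex.ofReal_div, Complex.ofReal_re, inv_pow, one_div]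

lemma weierstrassAxis_of_conj {a : ℝ} (ha : 0 < a)
    (hL : ∀ z, conj z ∈ L.lattice ↔ z ∈ L.lattice) (hperiod : (2 * a : ℂ) ∈ L.lattice)
    (hpole : ∀ t ∈ Ioo 0 (2 * a), (t : ℂ) ∉ L.lattice) :
    WeierstrassAxis a L.g₂.re L.g₃.re (fun t => (L.weierstrassP t).re)
      (fun t => (L.derivWeierstrassP t).re) where
  pos := ha
  solution :=
    { hasDerivAt := fun t ht => (hasDerivAt_weierstrassP (hpole t ht)).real_of_complex
      hasDerivAt_velocity := fun t ht => by
        refine (hasDerivAt_derivWeierstrassP (hpole t ht)).real_of_complex.congr_deriv ?_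
        rw [← ofReal_re_weierstrassP hL t, ← ofReal_re_g₂ hL]
        norm_cast }
  velocity_sq := fun t ht => by
    have hcubic := L.derivWeierstrassP_sq t (hpole t ht)
    rw [← ofReal_re_weierstrassP hL t, ← ofReal_re_derivWeierstrassP hL t, ← ofReal_re_g₂ hL,
      ← ofReal_re_g₃ hL] at hcubic
    exact_mod_cast hcubic
  tendsto_atTop := tendsto_re_weierstrassP_atTop
  velocity_half_period := by rw [derivWeierstrassP_half_period hperiod, Complex.zero_re]

end RealAxis

/-- The period pair `a + b i`, `a - b i`, whose lattice has the symmetry axes `ℝ` and `i ℝ`, with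
periods `2 a` and `2 b i`. -/
noncomputable def rhombic (a b : ℝ) (ha : a ≠ 0) (hb : b ≠ 0) : PeriodPair where
  ω₁ := a + b * Complex.I
  ω₂ := a - b * Complex.I
  indep := by
    rw [LinearIndependent.pair_iff]
    intro s t h
    have hre : (s + t) * a = 0 := by simpa [add_mul] using congrArg Complex.re h
    have him : (s - t) * b = 0 := by
      rw [sub_mul, sub_eq_add_neg]
      simpa using congrArg Complex.im h
    have hadd := (mul_eq_zero.mp hre).resolve_right ha
    have hsub := (mul_eq_zero.mp him).resolve_right hb
    constructor <;> linarith

section Rhombic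

variable {a b : ℝ} (ha : a ≠ 0) (hb : b ≠ 0)

lemma mem_rhombic_iff {z : ℂ} : z ∈ (rhombic a b ha hb).lattice ↔
    ∃ m n : ℤ, (m + n) * a = z.re ∧ (m - n) * b = z.im := by
  simp [PeriodPair.mem_lattice, rhombic, Complex.ext_iff, add_mul, sub_eq_add_neg]

lemma conj_mem_rhombic_iff (z : ℂ) :
    conj z ∈ (rhombic a b ha hb).lattice ↔ z ∈ (rhombic a b ha hb).lattice := by
  simp only [mem_rhombic_iff, Complex.conj_re, Complex.conj_im]
  constructor <;> rintro ⟨m, n, hre, him⟩ <;> exact ⟨n, m, by linarith, by linarith⟩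

lemma I_mul_mem_rhombic_iff (z : ℂ) :
    Complex.I * z ∈ (rhombic b a hb ha).lattice ↔ z ∈ (rhombic a b ha hb).lattice := by
  simp only [mem_rhombic_iff, Complex.I_mul_re, Complex.I_mul_im]
  constructor
  · rintro ⟨m, n, hre, him⟩
    exact ⟨-n, m, by push_cast; linarith, by push_cast; linarith⟩
  · rintro ⟨m, n, hre, him⟩
    exact ⟨n, -m, by push_cast; linarith, by push_cast; linarith⟩

lemma ofReal_mem_rhombic_iff {t : ℝ} :
    (t : ℂ) ∈ (rhombic a b ha hb).lattice ↔ ∃ m : ℤ, m * (2 * a) = t := by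
  simp only [mem_rhombic_iff, Complex.ofReal_re, Complex.ofReal_im]
  constructor
  · rintro ⟨m, n, hre, him⟩
    have hmn := (mul_eq_zero.mp him).resolve_right hb
    exact ⟨m, by linear_combination hre + hmn * a⟩
  · rintro ⟨m, hm⟩
    exact ⟨m, m, by linarith, by simp⟩

lemma two_mul_mem_rhombic : (2 * a : ℂ) ∈ (rhombic a b ha hb).lattice := by
  exact_mod_cast (ofReal_mem_rhombic_iff ha hb (t := 2 * a)).mpr ⟨1, by simp⟩

lemma ofReal_notMem_rhombic {t : ℝ} (ht : t ∈ Ioo 0 (2 * a)) :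
    (t : ℂ) ∉ (rhombic a b ha hb).lattice := by
  rw [ofReal_mem_rhombic_iff]
  rintro ⟨m, rfl⟩
  have ha' : 0 < 2 * a := ht.1.trans ht.2
  have hpos : (0 : ℝ) < m := pos_of_mul_pos_left ht.1 ha'.le
  have hlt : (m : ℝ) < 1 := by nlinarith [ht.2]
  norm_cast at hpos hlt
  omega

lemma weierstrassAxis_rhombic (ha : 0 < a) :
    WeierstrassAxis a (rhombic a b ha.ne' hb).g₂.re (rhombic a b ha.ne' hb).g₃.re
      (fun t => ((rhombic a b ha.ne' hb).weierstrassP t).re)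
      (fun t => ((rhombic a b ha.ne' hb).derivWeierstrassP t).re) :=
  weierstrassAxis_of_conj ha (conj_mem_rhombic_iff _ hb) (two_mul_mem_rhombic _ hb)
    fun _ => ofReal_notMem_rhombic _ hb

lemma g₂_rhombic_comm : (rhombic b a hb ha).g₂ = (rhombic a b ha hb).g₂ := by
  rw [PeriodPair.g₂, PeriodPair.g₂, G_mul Complex.I_ne_zero (I_mul_mem_rhombic_iff ha hb),
    Complex.I_pow_four, inv_one, one_mul]

lemma g₃_rhombic_comm : (rhombic b a hb ha).g₃ = -(rhombic a b ha hb).g₃ := by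
  have hI : Complex.I ^ 6 = -1 := by rw [Complex.I_pow_eq_pow_mod]; exact Complex.I_sq
  rw [PeriodPair.g₃, PeriodPair.g₃, G_mul Complex.I_ne_zero (I_mul_mem_rhombic_iff ha hb), hI]
  ring

lemma weierstrassP_rhombic_comm :
    (rhombic b a hb ha).weierstrassP b = -(rhombic a b ha hb).weierstrassP a := by
  have hmem : (b - Complex.I * a : ℂ) ∈ (rhombic b a hb ha).lattice :=
    (mem_rhombic_iff hb ha).mpr ⟨0, 1, by simp, by simp⟩
  have hmul := weierstrassP_mul Complex.I_ne_zero (I_mul_mem_rhombic_iff ha hb) a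
  have hperiod := (rhombic b a hb ha).weierstrassP_add_coe (Complex.I * a) ⟨_, hmem⟩
  rw [add_sub_cancel, hmul, Complex.I_sq] at hperiod
  simpa using hperiod

end Rhombic

lemma rhombic_invariants {a b m : ℝ} (ha : a ≠ 0) (hb : b ≠ 0) (hm : m ∈ Ioo (0 : ℝ) 1)
    (ham : a = ellipticF (1 - m) (π / 2)) (hbm : b = ellipticF m (π / 2)) :
    (rhombic a b ha hb).weierstrassP a = -(2 / 3) * (1 - 2 * m) ∧
      (rhombic a b ha hb).g₂ = 12 * (rhombic a b ha hb).weierstrassP a ^ 2 - 4 := by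
  have ha₀ : 0 < a := ham ▸ ellipticF_pi_div_two_pos (by linarith [hm.1])
  have hb₀ : 0 < b := hbm ▸ ellipticF_pi_div_two_pos hm.2
  have haxis := weierstrassAxis_rhombic ha hb₀
  rw [g₂_rhombic_comm, g₃_rhombic_comm, Complex.neg_re] at haxis
  obtain ⟨he, hg₂⟩ := (weierstrassAxis_rhombic hb ha₀).invariants_of_half_periods_eq_ellipticF
    haxis (by rw [weierstrassP_rhombic_comm, Complex.neg_re]) hm ham hbm
  rw [← ofReal_re_weierstrassP (conj_mem_rhombic_iff ha hb), ← ofReal_re_g₂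
    (conj_mem_rhombic_iff ha hb)]
  exact ⟨by simpa using congrArg Complex.ofReal he, by exact_mod_cast hg₂⟩

/-! ### Moment integrals as sums over a quadrant -/

section ExpMoments

variable {r : ℂ}

lemma norm_pow_mul_exp (r : ℂ) (N : ℕ) {t : ℝ} (ht : 0 < t) :
    ‖(t : ℂ) ^ N * Complex.exp (-(r * t))‖ = t ^ N * Real.exp (-(r.re * t)) := by
  rw [norm_mul, norm_pow, Complex.norm_real, Complex.norm_exp, Real.norm_of_nonneg ht.le]
  simp

lemma integral_norm_pow_mul_exp (hr : 0 < r.re) (N : ℕ) :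
    ∫ t : ℝ in Ioi 0, ‖(t : ℂ) ^ N * Complex.exp (-(r * t))‖
      = N.factorial * (r.re ^ (N + 1))⁻¹ := by
  rw [setIntegral_congr_fun measurableSet_Ioi fun t ht => norm_pow_mul_exp r N ht]
  have hGamma := Real.integral_rpow_mul_exp_neg_mul_Ioi (a := (N + 1 : ℝ)) (by positivity) hr
  rw [Real.Gamma_nat_eq_factorial, add_sub_cancel_right] at hGamma
  simp only [rpow_natCast] at hGamma
  rw [hGamma, ← Nat.cast_succ, rpow_natCast, one_div, inv_pow, mul_comm]

lemma integrable_pow_mul_exp (hr : 0 < r.re) (N : ℕ) :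
    IntegrableOn (fun t : ℝ => (t : ℂ) ^ N * Complex.exp (-(r * t))) (Ioi 0) := by
  refine (integrable_norm_iff (by fun_prop)).mp (Integrable.of_integral_ne_zero ?_)
  rw [integral_norm_pow_mul_exp hr N]
  positivity

lemma hasDerivAt_pow_mul_exp (r : ℂ) (N : ℕ) (t : ℝ) :
    HasDerivAt (fun t : ℝ => (t : ℂ) ^ (N + 1) * Complex.exp (-(r * t)))
      ((N + 1) * ((t : ℂ) ^ N * Complex.exp (-(r * t)))
        - r * ((t : ℂ) ^ (N + 1) * Complex.exp (-(r * t)))) t := by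
  have hcomplex := (hasDerivAt_pow (N + 1) (t : ℂ)).mul
    (((hasDerivAt_id (t : ℂ)).const_mul r).fun_neg.cexp)
  refine hcomplex.comp_ofReal.congr_deriv ?_
  push_cast
  simp only [id]
  ring

lemma integral_pow_mul_exp (hr : 0 < r.re) (N : ℕ) :
    ∫ t : ℝ in Ioi 0, (t : ℂ) ^ N * Complex.exp (-(r * t)) = N.factorial * (r ^ (N + 1))⁻¹ := by
  have hr₀ : r ≠ 0 := by rintro rfl; exact hr.false
  induction N with
  | zero => simpa using integral_exp_mul_complex_Ioi (a := -r) (by simpa using hr) 0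
  | succ N ih =>
    have hint := (integrable_pow_mul_exp hr N).const_mul (N + 1 : ℂ)
    have hint' := (integrable_pow_mul_exp hr (N + 1)).const_mul r
    have hparts := integral_Ioi_of_hasDerivAt_of_tendsto' (a := 0)
      (fun t _ => hasDerivAt_pow_mul_exp r N t) (hint.sub hint')
      (tendsto_zero_of_hasDerivAt_of_integrableOn_Ioi (a := 0)
        (fun t _ => hasDerivAt_pow_mul_exp r N t) (hint.sub hint')
        (integrable_pow_mul_exp hr (N + 1)))
    rw [integral_sub hint hint', integral_const_mul, integral_const_mul, ih, Complex.ofReal_zero,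
      zero_pow N.succ_ne_zero, zero_mul, sub_zero, sub_eq_zero] at hparts
    rw [← mul_right_inj' hr₀, ← hparts, Nat.factorial_succ]
    push_cast
    field_simp
    ring

end ExpMoments

/-- The points with half-integer coordinates in the quadrant spanned by `u` and `v`, that is, the
points of the lattice `ℤ u + ℤ v` translated by `(u + v) / 2`. -/
noncomputable def halfIntPoint (u v : ℂ) (i : ℕ × ℕ) : ℂ := (i.1 + 1 / 2) * u + (i.2 + 1 / 2) * v

/-- The sum of the inverse `r`-th powers of the half-integer points of a quadrant. -/
noncomputable def quadrantSum (u v : ℂ) (r : ℕ) : ℂ := ∑' i, (halfIntPoint u v i ^ r)⁻¹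

section Quadrant

variable {u v : ℂ}

lemma halfIntPoint_re (u v : ℂ) (i : ℕ × ℕ) :
    (halfIntPoint u v i).re = (i.1 + 1 / 2) * u.re + (i.2 + 1 / 2) * v.re := by
  have hre (n : ℕ) : (n + 1 / 2 : ℂ) = ((n + 1 / 2 : ℝ) : ℂ) := by push_cast; rfl
  rw [halfIntPoint, hre, hre, Complex.add_re, Complex.re_ofReal_mul, Complex.re_ofReal_mul]

lemma halfIntPoint_mul (u v c : ℂ) (i : ℕ × ℕ) :
    halfIntPoint (c * u) (c * v) i = c * halfIntPoint u v i := by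
  simp only [halfIntPoint]
  ring

lemma quadrantSum_mul (u v c : ℂ) (r : ℕ) :
    quadrantSum (c * u) (c * v) r = (c ^ r)⁻¹ * quadrantSum u v r := by
  simp only [quadrantSum, halfIntPoint_mul, mul_pow, mul_inv, tsum_mul_left]

lemma quadrantSum_comm (u v : ℂ) (r : ℕ) : quadrantSum u v r = quadrantSum v u r :=
  ((Equiv.prodComm ℕ ℕ).tsum_eq _).symm.trans
    (tsum_congr fun i => by simp [halfIntPoint, add_comm])

lemma summable_inv_half_add_pow {x y : ℝ} (hx : 0 < x) (hy : 0 < y) {r : ℕ} (hr : 2 < r) :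
    Summable fun i : ℕ × ℕ => (((i.1 + 1 / 2) * x + (i.2 + 1 / 2) * y) ^ r)⁻¹ := by
  have hr' : (1 : ℝ) < r / 2 := by
    rw [one_lt_div two_pos]
    exact_mod_cast hr
  have hsingle : Summable fun n : ℕ => (((n : ℝ) + 1 / 2) ^ (r / 2 : ℝ))⁻¹ :=
    ((Real.summable_one_div_nat_add_rpow (1 / 2) _).mpr hr').congr fun n => by
      rw [abs_of_pos (by positivity), one_div ((_ : ℝ) ^ _)]
  refine .of_nonneg_of_le (fun i => by positivity) (fun i => ?_)
    ((hsingle.mul_of_nonneg hsingle (fun n => by positivity) fun n => by positivity).mul_left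
      ((x * y) ^ (r / 2 : ℝ))⁻¹)
  rw [← mul_inv, ← mul_inv]
  refine inv_anti₀ (by positivity) ?_
  rw [← mul_rpow (by positivity) (by positivity), ← mul_rpow (by positivity) (by positivity)]
  calc (x * y * ((i.1 + 1 / 2) * (i.2 + 1 / 2))) ^ (r / 2 : ℝ)
      = (((i.1 + 1 / 2) * x) * ((i.2 + 1 / 2) * y)) ^ (r / 2 : ℝ) := by ring_nf
    _ ≤ (((i.1 + 1 / 2) * x + (i.2 + 1 / 2) * y) ^ 2) ^ (r / 2 : ℝ) := by
      have hX : 0 < (i.1 + 1 / 2) * x := by positivity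
      have hY : 0 < (i.2 + 1 / 2) * y := by positivity
      gcongr
      nlinarith
    _ = ((i.1 + 1 / 2) * x + (i.2 + 1 / 2) * y) ^ r := by
      rw [← rpow_natCast _ 2, ← rpow_mul (by positivity), Nat.cast_two,
        mul_div_cancel₀ _ two_ne_zero, rpow_natCast]

lemma hasSum_exp_neg_half_odd_mul (hu : 0 < u.re) :
    HasSum (fun n : ℕ => Complex.exp (-((n + 1 / 2) * u))) (2 * Complex.sinh (u / 2))⁻¹ := by
  have hnorm : ‖Complex.exp (-u)‖ < 1 := by simpa [Complex.norm_exp] using hu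
  have hgeom := (hasSum_geometric_of_norm_lt_one hnorm).mul_left (Complex.exp (-(u / 2)))
  have hsinh : 2 * Complex.sinh (u / 2)
      = (Complex.exp (-(u / 2)))⁻¹ * (1 - Complex.exp (-u)) := by
    rw [Complex.two_sinh, ← Complex.exp_neg, mul_sub, mul_one, ← Complex.exp_add]
    ring_nf
  rw [hsinh, mul_inv, inv_inv]
  refine hgeom.congr_fun fun n => ?_
  rw [← Complex.exp_nat_mul, ← Complex.exp_add]
  ring_nf

lemma hasSum_exp_neg_halfIntPoint (hu : 0 < u.re) (hv : 0 < v.re) :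
    HasSum (fun i => Complex.exp (-halfIntPoint u v i))
      (4 * Complex.sinh (u / 2) * Complex.sinh (v / 2))⁻¹ := by
  have hsumu := hasSum_exp_neg_half_odd_mul hu
  have hsumv := hasSum_exp_neg_half_odd_mul hv
  have hprod := summable_mul_of_summable_norm hsumu.summable.norm hsumv.summable.norm
  have hterm (i : ℕ × ℕ) : Complex.exp (-halfIntPoint u v i)
      = Complex.exp (-((i.1 + 1 / 2) * u)) * Complex.exp (-((i.2 + 1 / 2) * v)) := by
    rw [← Complex.exp_add, halfIntPoint, neg_add]
  have hsinh : 4 * Complex.sinh (u / 2) * Complex.sinh (v / 2)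
      = 2 * Complex.sinh (u / 2) * (2 * Complex.sinh (v / 2)) := by ring
  simp only [hterm, hsinh, mul_inv]
  simpa only [mul_inv] using hsumu.mul hsumv hprod

lemma integral_pow_div_sinh_mul_sinh (hu : 0 < u.re) (hv : 0 < v.re) {N : ℕ} (hN : 2 ≤ N) :
    ∫ t : ℝ in Ioi 0, (t : ℂ) ^ N / (4 * Complex.sinh (t * u / 2) * Complex.sinh (t * v / 2))
      = N.factorial * quadrantSum u v (N + 1) := by
  have hre (i : ℕ × ℕ) : 0 < (halfIntPoint u v i).re := by
    rw [halfIntPoint_re]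
    positivity
  have hexpand : ∀ t ∈ Ioi (0 : ℝ),
      (t : ℂ) ^ N / (4 * Complex.sinh (t * u / 2) * Complex.sinh (t * v / 2))
        = ∑' i, (t : ℂ) ^ N * Complex.exp (-(halfIntPoint u v i * t)) := by
    intro t ht
    have hsum := hasSum_exp_neg_halfIntPoint (u := t * u) (v := t * v)
      (by simpa using mul_pos ht hu) (by simpa using mul_pos ht hv)
    simp only [halfIntPoint_mul, mul_comm (t : ℂ) (halfIntPoint u v _)] at hsum
    rw [tsum_mul_left, hsum.tsum_eq, div_eq_mul_inv]
  rw [setIntegral_congr_fun measurableSet_Ioi hexpand, quadrantSum, ← tsum_mul_left,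
    ← integral_tsum_of_summable_integral_norm fun i => integrable_pow_mul_exp (hre i) N]
  · exact tsum_congr fun i => integral_pow_mul_exp (hre i) N
  · simp_rw [integral_norm_pow_mul_exp (hre _), halfIntPoint_re]
    exact (summable_inv_half_add_pow hu hv (by lia)).mul_left _

lemma four_mul_sinh_mul_sinh (p q t : ℝ) :
    4 * Complex.sinh (t * (p + q * Complex.I) / 2) * Complex.sinh (t * (p - q * Complex.I) / 2)
      = 2 * (Real.cosh (p * t) - Real.cos (q * t) : ℝ) := by
  set x := (t : ℂ) * (p + q * Complex.I) / 2 with hx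
  set y := (t : ℂ) * (p - q * Complex.I) / 2 with hy
  have hadd : Complex.cosh (x + y) = Complex.cosh (p * t) := by rw [hx, hy]; ring_nf
  have hsub : Complex.cosh (x - y) = Complex.cos (q * t) := by
    rw [← Complex.cosh_mul_I, hx, hy]
    ring_nf
  push_cast
  rw [← hadd, ← hsub, Complex.cosh_add, Complex.cosh_sub]
  ring

lemma integral_pow_div_cosh_sub_cos {p : ℝ} (hp : 0 < p) (q : ℝ) {n : ℕ} (hn : 1 ≤ n) :
    ((∫ x in Ioi (0 : ℝ), x ^ n / (Real.cosh (p * √x) - Real.cos (q * √x)) : ℝ) : ℂ)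
      = 4 * (2 * n + 1).factorial *
        quadrantSum (p + q * Complex.I) (p - q * Complex.I) (2 * n + 2) := by
  rw [mul_assoc, ← integral_pow_div_sinh_mul_sinh (by simpa using hp) (by simpa using hp) (by lia),
    ← integral_const_mul, ← integral_comp_rpow_Ioi_of_pos (p := 2) two_pos,
    ← integral_complex_ofReal]
  refine setIntegral_congr_fun measurableSet_Ioi fun t ht => ?_
  have hsub : (2 : ℝ) - 1 = 1 := by norm_num
  rw [four_mul_sinh_mul_sinh, hsub, rpow_one, rpow_two, Real.sqrt_sq (le_of_lt ht), smul_eq_mul,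
    div_mul_eq_div_div]
  push_cast
  ring

end Quadrant

section LatticeSum

variable {E : Type*} [NormedAddCommGroup E] [CompleteSpace E]

lemma neg_natCast_add_one_injective : Function.Injective fun n : ℕ => -((n : ℤ) + 1) :=
  fun m n h => by simpa using h

lemma tsum_int_eq_tsum_nat_add_tsum_nat {f : ℤ → E} (hf : Summable f) :
    ∑' n, f n = ∑' n : ℕ, f n + ∑' n : ℕ, f (-(n + 1)) :=
  tsum_of_nat_of_neg_add_one (hf.comp_injective Nat.cast_injective)
    (hf.comp_injective neg_natCast_add_one_injective)

lemma tsum_int_prod_eq_two_nsmul_tsum_nat_prod {f : ℤ × ℤ → E} (hf : Summable f)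
    (hsymm : ∀ m n, f (-(m + 1), -(n + 1)) = f (m, n)) :
    ∑' x, f x = 2 • (∑' i : ℕ × ℕ, f (i.1, i.2) + ∑' i : ℕ × ℕ, f (i.1, -(i.2 + 1))) := by
  have hrow (m : ℤ) : ∑' n, f (-(m + 1), n) = ∑' n, f (m, n) := by
    rw [← ((Equiv.addRight (1 : ℤ)).trans (Equiv.neg ℤ)).tsum_eq]
    exact tsum_congr fun n => hsymm m n
  have hpos : Summable fun i : ℕ × ℕ => f (i.1, i.2) :=
    hf.comp_injective (Nat.cast_injective.prodMap Nat.cast_injective)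
  have hneg : Summable fun i : ℕ × ℕ => f (i.1, -(i.2 + 1)) :=
    hf.comp_injective (Nat.cast_injective.prodMap neg_natCast_add_one_injective)
  rw [hf.tsum_prod, tsum_int_eq_tsum_nat_add_tsum_nat hf.prod, hpos.tsum_prod, hneg.tsum_prod,
    ← hpos.prod.tsum_add hneg.prod]
  simp only [hrow, two_nsmul, tsum_int_eq_tsum_nat_add_tsum_nat (hf.prod_factor _)]

end LatticeSum

lemma sumInvPow_half_period (L : PeriodPair) {r : ℕ} (hr : 2 < r) (heven : Even r) :
    L.sumInvPow ((L.ω₁ + L.ω₂) / 2) r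
      = 2 * (quadrantSum L.ω₁ L.ω₂ r + quadrantSum L.ω₁ (-L.ω₂) r) := by
  let e : ℤ × ℤ ≃ L.lattice :=
    ((Equiv.addRight (1 : ℤ)).prodCongr (Equiv.addRight (1 : ℤ))).trans
      L.latticeEquivProd.symm.toEquiv
  have he (x : ℤ × ℤ) : (e x : ℂ) - (L.ω₁ + L.ω₂) / 2
      = (x.1 + 1 / 2) * L.ω₁ + (x.2 + 1 / 2) * L.ω₂ := by
    have hcoe : (e x : ℂ) = ((x.1 + 1 : ℤ) : ℂ) * L.ω₁ + ((x.2 + 1 : ℤ) : ℂ) * L.ω₂ :=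
      L.latticeEquiv_symm_apply (x.1 + 1, x.2 + 1)
    rw [hcoe]
    push_cast
    ring
  have hsum := e.hasSum_iff.mpr (L.hasSum_sumInvPow ((L.ω₁ + L.ω₂) / 2) hr)
  simp only [Function.comp_def, he] at hsum
  rw [← hsum.tsum_eq, tsum_int_prod_eq_two_nsmul_tsum_nat_prod hsum.summable, nsmul_eq_mul,
    Nat.cast_two]
  · congr 2
    refine tsum_congr fun i => ?_
    rw [halfIntPoint]
    push_cast
    ring_nf
  · intro m n
    rw [← heven.neg_pow]
    push_cast
    ring_nf

lemma quadrantSum_rotate (a b : ℝ) (n : ℕ) :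
    quadrantSum (b + a * Complex.I) (b - a * Complex.I) (2 * n)
      = (-1) ^ n * quadrantSum (a + b * Complex.I) (-(a - b * Complex.I)) (2 * n) := by
  have hI : -Complex.I * (a + b * Complex.I) = b - a * Complex.I := by
    linear_combination -(b : ℂ) * Complex.I_sq
  have hI' : -Complex.I * -(a - b * Complex.I) = b + a * Complex.I := by
    linear_combination -(b : ℂ) * Complex.I_sq
  rw [quadrantSum_comm, ← hI, ← hI', quadrantSum_mul, pow_mul, neg_sq, Complex.I_sq, ← inv_pow,
    inv_neg_one]

/-- Each of the two integrals supplies one pair of opposite quadrants of the lattice. -/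
lemma moments_eq_sumInvPow {a b : ℝ} (ha : 0 < a) (hb : 0 < b) {n : ℕ} (hn : 1 ≤ n) :
    (((∫ x in Ioi (0 : ℝ), x ^ n / (Real.cos (b * √x) - Real.cosh (a * √x)))
      + (-1 : ℝ) ^ n *
        ∫ x in Ioi (0 : ℝ), x ^ n / (Real.cosh (b * √x) - Real.cos (a * √x)) : ℝ) : ℂ)
      = -2 * ((2 * n + 1).factorial * (rhombic a b ha.ne' hb.ne').sumInvPow a (2 * n + 2)) := by
  have hneg : ∫ x in Ioi (0 : ℝ), x ^ n / (Real.cos (b * √x) - Real.cosh (a * √x))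
      = -∫ x in Ioi (0 : ℝ), x ^ n / (Real.cosh (a * √x) - Real.cos (b * √x)) := by
    rw [← integral_neg]
    refine setIntegral_congr_fun measurableSet_Ioi fun x _ => ?_
    rw [← div_neg, neg_sub]
  have hhalf : ((rhombic a b ha.ne' hb.ne').ω₁ + (rhombic a b ha.ne' hb.ne').ω₂) / 2 = (a : ℂ) := by
    simp only [rhombic]
    ring
  have hlattice := sumInvPow_half_period (rhombic a b ha.ne' hb.ne') (r := 2 * n + 2) (by lia)
    ⟨n + 1, by ring⟩
  rw [hhalf] at hlattice
  have hrotate := quadrantSum_rotate a b (n + 1)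
  rw [mul_add_one] at hrotate
  have hsign : (-1 : ℂ) ^ n * (-1) ^ n = 1 := by rw [← mul_pow, neg_one_mul, neg_neg, one_pow]
  rw [hneg, hlattice]
  push_cast
  rw [integral_pow_div_cosh_sub_cos ha b hn, integral_pow_div_cosh_sub_cos hb a hn, hrotate,
    pow_succ]
  simp only [rhombic]
  linear_combination (-4 * ((2 * n + 1).factorial : ℂ) *
    quadrantSum (a + b * Complex.I) (-(a - b * Complex.I)) (2 * n + 2)) * hsign

/-! ### The recurrence -/

lemma sum_range_even {M : Type*} [AddCommMonoid M] {f : ℕ → M} (hf : ∀ j, f (2 * j + 1) = 0)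
    (m : ℕ) : ∑ i ∈ Finset.range (2 * m + 1), f i = ∑ j ∈ Finset.range (m + 1), f (2 * j) := by
  induction m with
  | zero => simp
  | succ m ih =>
    rw [mul_add_one, Finset.sum_range_succ, Finset.sum_range_succ, ih, hf, add_zero,
      Finset.sum_range_succ _ (m + 1), mul_add_one]

lemma iteratedDeriv_odd_eq_zero_of_reflect {𝕜 F : Type*} [NontriviallyNormedField 𝕜]
    [NormedAddCommGroup F] [NormedSpace 𝕜 F] [IsAddTorsionFree F] {G : 𝕜 → F} {a : 𝕜}
    (hG : ∀ z, G (2 * a - z) = G z) (j : ℕ) : iteratedDeriv (2 * j + 1) G a = 0 := by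
  have hreflect := congrFun (iteratedDeriv_comp_const_sub (2 * j + 1) G (2 * a)) a
  rw [funext hG, show 2 * a - a = a by ring, Odd.neg_one_pow ⟨j, rfl⟩, neg_one_smul] at hreflect
  exact self_eq_neg.mp hreflect

section QuadraticEquation

variable {𝕜 : Type*} [NontriviallyNormedField 𝕜] {G : 𝕜 → 𝕜} {a A B C : 𝕜}
  (hG : ContDiffAt 𝕜 ⊤ G a)
  (hode : deriv (deriv G) =ᶠ[𝓝 a] fun z => A + (B * G z + C * (G z * G z)))

include hode

lemma iteratedDeriv_two_of_quadratic : iteratedDeriv 2 G a = A + B * G a + C * G a ^ 2 := by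
  rw [iteratedDeriv_succ', iteratedDeriv_one, hode.eq_of_nhds]
  ring

include hG

lemma iteratedDeriv_add_two_of_quadratic {N : ℕ} (hN : 0 < N) :
    iteratedDeriv (N + 2) G a = B * iteratedDeriv N G a + C * ∑ i ∈ Finset.range (N + 1),
      (N.choose i : 𝕜) * iteratedDeriv i G a * iteratedDeriv (N - i) G a := by
  have hGN : ContDiffAt 𝕜 N G a := hG.of_le (by exact_mod_cast le_top)
  rw [iteratedDeriv_succ', iteratedDeriv_succ', hode.iteratedDeriv_eq N,
    iteratedDeriv_const_add hN,
    iteratedDeriv_fun_add (contDiffAt_const.mul hGN) (contDiffAt_const.mul (hGN.mul hGN)),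
    iteratedDeriv_const_mul_field, iteratedDeriv_const_mul_field, iteratedDeriv_fun_mul hGN hGN]

lemma iteratedDeriv_even_recurrence (h₀ : G a = 0)
    (hodd : ∀ j, iteratedDeriv (2 * j + 1) G a = 0) (n : ℕ) :
    iteratedDeriv (2 * (n + 2) + 2) G a = B * iteratedDeriv (2 * (n + 1) + 2) G a
      + C * ∑ j ∈ Finset.range (n + 1), ((2 * n + 4).choose (2 * j + 2) : 𝕜)
        * iteratedDeriv (2 * j + 2) G a * iteratedDeriv (2 * (n - j) + 2) G a := by
  rw [iteratedDeriv_add_two_of_quadratic hG hode (by lia),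
    sum_range_even fun j => by rw [hodd, mul_zero, zero_mul], Finset.sum_range_succ,
    Finset.sum_range_succ']
  simp only [mul_zero, Nat.sub_self, iteratedDeriv_zero, h₀, add_zero, zero_mul]
  congr 2
  refine Finset.sum_congr rfl fun j hj => ?_
  have hjn := Finset.mem_range.mp hj
  rw [show 2 * (n + 2) - 2 * (j + 1) = 2 * (n - j) + 2 by lia]
  rfl

lemma iteratedDeriv_four_of_quadratic (h₀ : G a = 0) (h₁ : iteratedDeriv 1 G a = 0) :
    iteratedDeriv 4 G a = B * A := by
  rw [iteratedDeriv_add_two_of_quadratic hG hode two_pos, iteratedDeriv_two_of_quadratic hode]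
  simp [Finset.sum_range_succ, h₀, h₁]

end QuadraticEquation

section MomentFunction

/-- The function `-2 (℘ - ℘(w))`. For the half period `w = K'` of the lattice generated by
`K' ± i K` its even Taylor coefficients at `w` are Kuznetsov's moments; the factor `-2` is the
normalization of `moments_eq_sumInvPow`. -/
noncomputable def momentFunction (L : PeriodPair) (w z : ℂ) : ℂ :=
  -2 * (L.weierstrassP z - L.weierstrassP w)

variable (L : PeriodPair) {w : ℂ}

lemma momentFunction_self (w : ℂ) : momentFunction L w w = 0 := by
  rw [momentFunction, sub_self, mul_zero]

lemma momentFunction_reflect (hw : 2 * w ∈ L.lattice) (z : ℂ) :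
    momentFunction L w (2 * w - z) = momentFunction L w z := by
  rw [momentFunction, weierstrassP_sub_of_mem hw, momentFunction]

lemma contDiffAt_momentFunction (hw : w ∉ L.lattice) : ContDiffAt ℂ ⊤ (momentFunction L w) w :=
  (analyticAt_const.mul ((L.analyticOnNhd_weierstrassP w hw).sub analyticAt_const)).contDiffAt

lemma deriv_deriv_momentFunction (hw : w ∉ L.lattice) :
    deriv (deriv (momentFunction L w)) =ᶠ[𝓝 w] fun z =>
      (L.g₂ - 12 * L.weierstrassP w ^ 2) + (12 * L.weierstrassP w * momentFunction L w z
        + -3 * (momentFunction L w z * momentFunction L w z)) := by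
  have hderiv : deriv (momentFunction L w) = fun z => -2 * L.derivWeierstrassP z := by
    funext z
    unfold momentFunction
    rw [deriv_const_mul_field, deriv_sub_const, L.deriv_weierstrassP]
  filter_upwards [L.isClosed_lattice.isOpen_compl.mem_nhds hw] with z hz
  rw [hderiv, ((hasDerivAt_derivWeierstrassP hz).const_mul (-2 : ℂ)).deriv]
  simp only [momentFunction]
  ring

lemma iteratedDeriv_momentFunction (hw : w ∉ L.lattice) {n : ℕ} (hn : n ≠ 0) :
    iteratedDeriv n (momentFunction L w) w = -2 * ((n + 1).factorial * L.sumInvPow w (n + 2)) := by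
  have htaylor := L.iteratedDeriv_weierstrassPExcept_self w (n := n)
  rw [PeriodPair.weierstrassPExcept_of_notMem _ _ hw, if_neg hn] at htaylor
  have hG : momentFunction L w = fun z => -2 * (-L.weierstrassP w + L.weierstrassP z) := by
    funext z
    rw [momentFunction, neg_add_eq_sub]
  rw [hG, iteratedDeriv_const_mul_field, iteratedDeriv_const_add (Nat.pos_of_ne_zero hn), htaylor]

lemma iteratedDeriv_two_momentFunction (hw : w ∉ L.lattice) :
    iteratedDeriv 2 (momentFunction L w) w = L.g₂ - 12 * L.weierstrassP w ^ 2 := by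
  rw [iteratedDeriv_two_of_quadratic (deriv_deriv_momentFunction L hw), momentFunction_self]
  ring

lemma iteratedDeriv_four_momentFunction (hw : w ∉ L.lattice) (h2w : 2 * w ∈ L.lattice) :
    iteratedDeriv 4 (momentFunction L w) w
      = 12 * L.weierstrassP w * (L.g₂ - 12 * L.weierstrassP w ^ 2) :=
  iteratedDeriv_four_of_quadratic (contDiffAt_momentFunction L hw) (deriv_deriv_momentFunction L hw)
    (momentFunction_self L w)
    (iteratedDeriv_odd_eq_zero_of_reflect (momentFunction_reflect L h2w) 0)

lemma iteratedDeriv_even_momentFunction (hw : w ∉ L.lattice) (h2w : 2 * w ∈ L.lattice) (n : ℕ) :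
    iteratedDeriv (2 * (n + 2) + 2) (momentFunction L w) w
      = 12 * L.weierstrassP w * iteratedDeriv (2 * (n + 1) + 2) (momentFunction L w) w
        + -3 * ∑ j ∈ Finset.range (n + 1), ((2 * n + 4).choose (2 * j + 2) : ℂ)
          * iteratedDeriv (2 * j + 2) (momentFunction L w) w
          * iteratedDeriv (2 * (n - j) + 2) (momentFunction L w) w :=
  iteratedDeriv_even_recurrence (contDiffAt_momentFunction L hw) (deriv_deriv_momentFunction L hw)
    (momentFunction_self L w)
    (iteratedDeriv_odd_eq_zero_of_reflect (momentFunction_reflect L h2w)) n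

end MomentFunction

lemma ellipticK_pos {k : ℝ} (hk : k ^ 2 < 1) : 0 < ellipticK k := by
  rw [ellipticK_eq_ellipticF]
  exact ellipticF_pi_div_two_pos hk

lemma Iminus_eq_iteratedDeriv {k : ℝ} (hK' : 0 < ellipticK √(1 - k ^ 2)) (hK : 0 < ellipticK k)
    (n : ℕ) : (Iminus k n : ℂ) = iteratedDeriv (2 * n + 2)
      (momentFunction (rhombic (ellipticK √(1 - k ^ 2)) (ellipticK k) hK'.ne' hK.ne')
        (ellipticK √(1 - k ^ 2))) (ellipticK √(1 - k ^ 2)) := by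
  rw [iteratedDeriv_momentFunction _ (ofReal_notMem_rhombic hK'.ne' hK.ne' ⟨hK', by linarith⟩)
    (by lia)]
  exact moments_eq_sumInvPow hK' hK le_add_self

theorem Iminus_recurrence (k : ℝ) (hk : k ∈ Set.Ioo (0 : ℝ) 1) :
    Iminus k 0 = -4 ∧
    Iminus k 1 = 32 * (1 - 2 * k ^ 2) ∧
    ∀ n : ℕ, Iminus k (n + 2) =
      -8 * (1 - 2 * k ^ 2) * Iminus k (n + 1) -
        3 * ∑ j ∈ Finset.range (n + 1),
          (Nat.choose (2 * n + 4) (2 * j + 2) : ℝ) * Iminus k j * Iminus k (n - j) := by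
  have hm : k ^ 2 ∈ Ioo (0 : ℝ) 1 := ⟨pow_pos hk.1 2, pow_lt_one₀ hk.1.le hk.2 two_ne_zero⟩
  have hsq : √(1 - k ^ 2) ^ 2 = 1 - k ^ 2 := Real.sq_sqrt (sub_nonneg.mpr hm.2.le)
  have hK : 0 < ellipticK k := ellipticK_pos hm.2
  have hK' : 0 < ellipticK √(1 - k ^ 2) := ellipticK_pos (by linarith [hm.1])
  obtain ⟨he, hg₂⟩ := rhombic_invariants hK'.ne' hK.ne' hm
    (by rw [ellipticK_eq_ellipticF, hsq]) (ellipticK_eq_ellipticF k)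
  have hmem := ofReal_notMem_rhombic hK'.ne' hK.ne' ⟨hK', by linarith⟩
  have h2mem := two_mul_mem_rhombic hK'.ne' hK.ne'
  have hmoment := Iminus_eq_iteratedDeriv hK' hK
  set L := rhombic (ellipticK √(1 - k ^ 2)) (ellipticK k) hK'.ne' hK.ne'
  refine ⟨?_, ?_, fun n => ?_⟩ <;> apply Complex.ofReal_injective
  · rw [hmoment, iteratedDeriv_two_momentFunction L hmem, hg₂, sub_sub_cancel_left]
    push_cast
    rfl
  · rw [hmoment, iteratedDeriv_four_momentFunction L hmem h2mem, hg₂, sub_sub_cancel_left, he]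
    push_cast
    ring
  · rw [hmoment, iteratedDeriv_even_momentFunction L hmem h2mem, he]
    simp only [← hmoment]
    push_cast
    ring
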